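/- Let g ∈ W_l and h ∈ W_n with l, n ≥ 0. Then: (i) if l > n, then T_π(gh) = T_π(g)h; (ii) if n > l, then T_π^op(gh) = g T_π^op(h); (iii) if l = n, then P_{≥2}[T_π(gh)] = P_{≥2}[T_π(g)h] and P_{≥2}[T_π^op(gh)] = P_{≥2}[g T_π^op(h)]. -/

import Mathlib

open scoped BigOperators ENNReal

universe u

/-- Ambient data for (the weak*-dense part of) an amalgamated free product
`(A, τ) = *_{i ∈ I, B} (A_i, τ_i)` of finite von Neumann algebras `A_i` with normal faithful
normalized traces over a common von Neumann subalgebra `B`, together with the trace-preserving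
conditional expectation `E : A → B` and the family of noncommutative `L_p`-(matrix) norms
(encoding Pisier's natural operator space structure on `L_p(A)`); the carrier `A` plays the
role of the weak*-dense *-subalgebra `W`, which is linearly spanned by `B` together with the
reduced words in the centered parts of the `A_i`. -/
structure AmalgSetting : Type (u + 1) where
  I : Type u
  A : Type u
  [ringA : Ring A]
  [algA : Algebra ℂ A]
  [starA : StarRing A]
  [smodA : StarModule ℂ A]
  B : Subalgebra ℂ A
  Ai : I → Subalgebra ℂ A
  B_le : ∀ i, B ≤ Ai i
  star_B : ∀ x ∈ B, star x ∈ B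
  star_Ai : ∀ i, ∀ x ∈ Ai i, star x ∈ Ai i
  E : A →ₗ[ℂ] A
  E_mem : ∀ x, E x ∈ B
  E_fix : ∀ x ∈ B, E x = x
  E_bimod : ∀ b₁ ∈ B, ∀ b₂ ∈ B, ∀ x, E (b₁ * x * b₂) = b₁ * E x * b₂
  E_star : ∀ x, E (star x) = star (E x)
  tr : A →ₗ[ℂ] ℂ
  tr_one : tr 1 = 1
  tr_comm : ∀ x y, tr (x * y) = tr (y * x)
  tr_E : ∀ x, tr (E x) = tr x
  tr_pos : ∀ x, 0 ≤ (tr (star x * x)).re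
  tr_faithful : ∀ x, tr (star x * x) = 0 → x = 0
  N : ℝ≥0∞ → (n : ℕ) → Matrix (Fin n) (Fin n) A → ℝ
  N_nonneg : ∀ p n x, 0 ≤ N p n x
  N_add : ∀ p n x y, 1 ≤ p → N p n (x + y) ≤ N p n x + N p n y
  N_smul : ∀ p n (c : ℂ) x, N p n (c • x) = ‖c‖ * N p n x
  N_two : ∀ n (x : Matrix (Fin n) (Fin n) A),
    N 2 n x ^ 2 = ∑ k, ∑ l, (tr (star (x k l) * x k l)).re
  span_words : ∀ x : A, x ∈ Submodule.span ℂ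
      ((B : Set A) ∪ {y | ∃ w : List I, w.Chain' (· ≠ ·) ∧ ∃ a : Fin w.length → A,
        (∀ j, a j ∈ Ai (w.get j) ∧ E (a j) = 0) ∧ y = (List.ofFn a).prod})

attribute [instance] AmalgSetting.ringA AmalgSetting.algA AmalgSetting.starA AmalgSetting.smodA

namespace AmalgSetting

variable (S : AmalgSetting)

/-- The centered part `Å_i = {x ∈ A_i : E x = 0}` of `A_i`. -/
def cent (i : S.I) : Set S.A := {x | x ∈ S.Ai i ∧ S.E x = 0}

/-- `x` is an elementary tensor `a_1 ⊗ ⋯ ⊗ a_n` (realized in `A` as the product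
`a_1 ⋯ a_n` of centered letters) along the word `w = (i_1, …, i_n)`. -/
def IsElemWord (w : List S.I) (x : S.A) : Prop :=
  ∃ a : Fin w.length → S.A, (∀ j, a j ∈ S.cent (w.get j)) ∧ x = (List.ofFn a).prod

/-- A reduced word: adjacent indices are distinct. -/
def Reduced (w : List S.I) : Prop := w.Chain' (· ≠ ·)

/-- The summand `W_{(i_1,…,i_n)} = Å_{i_1} ⊗_B ⋯ ⊗_B Å_{i_n}` of `W` (and `W_{()} = B`). -/
def Wword : List S.I → Submodule ℂ S.A
  | [] => Subalgebra.toSubmodule S.B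
  | w => Submodule.span ℂ {x | S.IsElemWord w x}

/-- The homogeneous part `W_n` of `W`. -/
def Wn (n : ℕ) : Submodule ℂ S.A :=
  ⨆ (w : List S.I) (_ : w.length = n ∧ S.Reduced w), S.Wword w

/-- The scalar `L_p`-norm. -/
def nrm (p : ℝ≥0∞) (x : S.A) : ℝ := S.N p 1 (fun _ _ => x)

/-- `T` is completely bounded on `L_p(A)` with cb-norm at most `C`, i.e. all matrix
amplifications of `T` are bounded by `C` (so that the bounded linear extension of `T` to
`L_p(A)` is completely bounded with `‖T‖_{cb(L_p(A))} ≤ C`). -/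
def IsCBWith (p : ℝ≥0∞) (T : S.A →ₗ[ℂ] S.A) (C : ℝ) : Prop :=
  ∀ (n : ℕ) (x : Matrix (Fin n) (Fin n) S.A), S.N p n (x.map T) ≤ C * S.N p n x

/-- `T` is completely bounded with constant `C` on the subspace `L_p(V)` of `L_p(A)`
corresponding to a subalgebra `V ⊆ A` (e.g. `V = A_i`). -/
def IsCBOnWith (p : ℝ≥0∞) (V : Subalgebra ℂ S.A) (T : S.A →ₗ[ℂ] S.A) (C : ℝ) : Prop :=
  ∀ (n : ℕ) (x : Matrix (Fin n) (Fin n) S.A), (∀ k l, x k l ∈ V) →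
    S.N p n (x.map T) ≤ C * S.N p n x

end AmalgSetting

namespace AmalgSetting

variable (S : AmalgSetting)

/-- The "opposite" companion `T^op(x) = (T(x*))*` of a map `T`. -/
def opConj (T : S.A →ₗ[ℂ] S.A) : S.A →ₗ[ℂ] S.A where
  toFun x := star (T (star x))
  map_add' x y := by simp [star_add, map_add]
  map_smul' c x := by simp [star_smul, map_smul, smul_smul]

/-- A family `π = (π_i)` of *-representations `π_i : A_i → A_i` fixing `B` pointwise
and commuting with the conditional expectation `E`. -/
structure RepFamily where
  π : S.I → S.A →ₗ[ℂ] S.A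
  mem : ∀ i, ∀ x ∈ S.Ai i, π i x ∈ S.Ai i
  map_mul : ∀ i, ∀ x ∈ S.Ai i, ∀ y ∈ S.Ai i, π i (x * y) = π i x * π i y
  map_star : ∀ i, ∀ x ∈ S.Ai i, π i (star x) = star (π i x)
  fix_B : ∀ i, ∀ b ∈ S.B, π i b = b
  E_comm : ∀ i, ∀ x ∈ S.Ai i, S.E (π i x) = S.E x

/-- `T` is the map `T_π` acting on the first letter of reduced words:
`T_π(b) = b` for `b ∈ B`, and `T_π(a_1 ⊗ ⋯ ⊗ a_n) = π_{i_1}(a_1) ⊗ a_2 ⊗ ⋯ ⊗ a_n`. -/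
def IsTpi (P : S.RepFamily) (T : S.A →ₗ[ℂ] S.A) : Prop :=
  (∀ b ∈ S.B, T b = b) ∧
  ∀ w : List S.I, S.Reduced w → ∀ a : Fin w.length → S.A,
    (∀ j, a j ∈ S.cent (w.get j)) →
    T ((List.ofFn a).prod) =
      (List.ofFn fun j : Fin w.length =>
        if (j : ℕ) = 0 then P.π (w.get j) (a j) else a j).prod

/-- `P` is the projection `P_{≥2} = Id − P_0 − P_1` onto words of length at least `2`. -/
def IsPge2 (P : S.A →ₗ[ℂ] S.A) : Prop :=
  (∀ x ∈ S.Wn 0, P x = 0) ∧ (∀ x ∈ S.Wn 1, P x = 0) ∧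
  ∀ n, 2 ≤ n → ∀ x ∈ S.Wn n, P x = x

/-- `P` is the natural projection `P_1 : W → W_1`. -/
def IsP1 (P : S.A →ₗ[ℂ] S.A) : Prop :=
  (∀ x ∈ S.Wn 1, P x = x) ∧ ∀ n, n ≠ 1 → ∀ x ∈ S.Wn n, P x = 0

/-- `Q` is the family of natural projections of `W` onto the word components
`W_{(i_1,…,i_n)}` (with `Q_{()}` the projection onto `B`, i.e. `E`). -/
def IsWordProj (Q : List S.I → S.A →ₗ[ℂ] S.A) : Prop :=
  (∀ w, S.Reduced w → ∀ x ∈ S.Wword w, Q w x = x) ∧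
  (∀ w w', S.Reduced w → S.Reduced w' → w ≠ w' → ∀ x ∈ S.Wword w', Q w x = 0) ∧
  (∀ w, ¬ S.Reduced w → Q w = 0) ∧
  (∀ x, (Function.support fun w => Q w x).Finite) ∧
  (∀ x, ∑ᶠ w, Q w x = x)

end AmalgSetting

/-!
Measure the failure of `T` to be a right module map by the bilinear map
`δ(x, y) = T(xy) - T(x)y`. It satisfies `δ(xy, z) = δ(x, yz) - δ(x, y)z` and vanishes when the
juxtaposed word `xy` is reduced and `x` has at least one letter. If the last letter `a` of `x = x'a`
and the first letter `c` of `y = cy'` lie in the same algebra and `x'` has at least one letter, then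
`δ(x'a, cy') = δ(x', (ac)y')`; splitting `ac` into its centered part, which contributes nothing, and
`E(ac) ∈ B` shortens both words by one letter. When `y` is the shorter word the recursion ends at
`y ∈ B`, where `δ` vanishes. For equal lengths it may instead end at two single letters of the same
algebra `A_i`, leaving a term of `A_i ⊆ W_0 + W_1`. The statements for the opposite map follow by
taking adjoints.
-/

theorem map₂_mul_mul_le_iff {R A M : Type*} [CommSemiring R] [Semiring A] [Algebra R A]
    [AddCommMonoid M] [Module R M] {f : A →ₗ[R] A →ₗ[R] M} {P P' Q Q' : Submodule R A}
    {V : Submodule R M} :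
    Submodule.map₂ f (P * P') (Q * Q') ≤ V ↔
      ∀ p ∈ P, ∀ p' ∈ P', ∀ q ∈ Q, ∀ q' ∈ Q', f (p * p') (q * q') ∈ V := by
  refine ⟨fun h p hp p' hp' q hq q' hq' => h (Submodule.apply_mem_map₂ f
    (Submodule.mul_mem_mul hp hp') (Submodule.mul_mem_mul hq hq')), fun h => ?_⟩
  refine Submodule.map₂_le.2 fun x hx y hy => ?_
  suffices P * P' ≤ V.comap (f.flip y) from this hx
  refine Submodule.mul_le.2 fun p hp p' hp' => ?_
  suffices Q * Q' ≤ V.comap (f (p * p')) from this hy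
  exact Submodule.mul_le.2 (h p hp p' hp')

/-- The bilinear map `δ(x, y) = T(xy) - T(x)y`, measuring the failure of `T` to be a right module
map. -/
def mulDefect {R A : Type*} [CommRing R] [Ring A] [Algebra R A] (T : A →ₗ[R] A) :
    A →ₗ[R] A →ₗ[R] A :=
  (LinearMap.mul R A).compr₂ T - (LinearMap.mul R A).comp T

section MulDefect

variable {R A : Type*} [CommRing R] [Ring A] [Algebra R A] (T : A →ₗ[R] A) (x y z : A)

theorem mulDefect_apply : mulDefect T x y = T (x * y) - T x * y := rfl

theorem mulDefect_mul_left :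
    mulDefect T (x * y) z = mulDefect T x (y * z) - mulDefect T x y * z := by
  simp only [mulDefect_apply]
  noncomm_ring

end MulDefect

namespace AmalgSetting

variable {S : AmalgSetting}

theorem Reduced.of_append_left {v w : List S.I} (h : S.Reduced (v ++ w)) : S.Reduced v :=
  List.IsChain.left_of_append h

theorem Reduced.of_cons {i : S.I} {w : List S.I} (h : S.Reduced (i :: w)) : S.Reduced w :=
  List.IsChain.of_cons h

theorem Reduced.append_overlap {v w : List S.I} {i : S.I} (hv : S.Reduced (v ++ [i]))
    (hw : S.Reduced (i :: w)) : S.Reduced (v ++ i :: w) := by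
  have h := List.IsChain.append_overlap (l₂ := [i]) (l₃ := w) hv hw (List.cons_ne_nil i [])
  rwa [List.append_assoc] at h

theorem Reduced.append_cons_of_ne {v w : List S.I} {i j : S.I} (hv : S.Reduced (v ++ [i]))
    (hw : S.Reduced (j :: w)) (hij : i ≠ j) : S.Reduced (v ++ [i] ++ j :: w) := by
  have hijw : S.Reduced (i :: j :: w) := List.isChain_cons_cons.2 ⟨hij, hw⟩
  simpa using hv.append_overlap hijw

theorem Reduced.reverse {w : List S.I} (h : S.Reduced w) : S.Reduced w.reverse :=
  List.isChain_reverse.2 (List.IsChain.imp (fun _ _ => Ne.symm) h)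

theorem E_mul_right {b : S.A} (hb : b ∈ S.B) (x : S.A) : S.E (x * b) = S.E x * b := by
  simpa using S.E_bimod 1 S.B.one_mem b hb x

theorem E_mul_left {b : S.A} (hb : b ∈ S.B) (x : S.A) : S.E (b * x) = b * S.E x := by
  simpa using S.E_bimod b hb 1 S.B.one_mem x

theorem mul_B_mem_cent {i : S.I} {a b : S.A} (ha : a ∈ S.cent i) (hb : b ∈ S.B) :
    a * b ∈ S.cent i :=
  ⟨mul_mem ha.1 (S.B_le i hb), by rw [E_mul_right hb, ha.2, zero_mul]⟩

theorem B_mul_mem_cent {i : S.I} {a b : S.A} (hb : b ∈ S.B) (ha : a ∈ S.cent i) :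
    b * a ∈ S.cent i :=
  ⟨mul_mem (S.B_le i hb) ha.1, by rw [E_mul_left hb, ha.2, mul_zero]⟩

theorem sub_E_mem_cent {i : S.I} {x : S.A} (hx : x ∈ S.Ai i) : x - S.E x ∈ S.cent i :=
  ⟨sub_mem hx (S.B_le i (S.E_mem x)), by rw [map_sub, S.E_fix _ (S.E_mem x), sub_self]⟩

theorem star_mem_cent {i : S.I} {a : S.A} (ha : a ∈ S.cent i) : star a ∈ S.cent i :=
  ⟨S.star_Ai i a ha.1, by rw [S.E_star, ha.2, star_zero]⟩

/-- The centered part `Å_i` as a linear subspace, so that it can be multiplied with the spaces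
`W_w` in the semiring of subspaces of `A`. -/
def centered (S : AmalgSetting) (i : S.I) : Submodule ℂ S.A :=
  Subalgebra.toSubmodule (S.Ai i) ⊓ LinearMap.ker S.E

theorem span_cent (i : S.I) : Submodule.span ℂ (S.cent i) = S.centered i :=
  Submodule.span_eq (S.centered i)

theorem centered_mul_B (i : S.I) : S.centered i * Subalgebra.toSubmodule S.B = S.centered i := by
  refine le_antisymm (Submodule.mul_le.2 fun a ha b hb => mul_B_mem_cent ha hb) ?_
  exact fun a ha => mul_one a ▸ Submodule.mul_mem_mul ha S.B.one_mem

theorem B_mul_centered (i : S.I) : Subalgebra.toSubmodule S.B * S.centered i = S.centered i := by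
  refine le_antisymm (Submodule.mul_le.2 fun b hb a ha => B_mul_mem_cent hb ha) ?_
  exact fun a ha => one_mul a ▸ Submodule.mul_mem_mul S.B.one_mem ha

theorem isElemWord_nil_iff {x : S.A} : S.IsElemWord [] x ↔ x = 1 := by
  simp [IsElemWord]

theorem isElemWord_cons_iff {i : S.I} {w : List S.I} {x : S.A} :
    S.IsElemWord (i :: w) x ↔ ∃ a ∈ S.cent i, ∃ y, S.IsElemWord w y ∧ a * y = x := by
  constructor
  · rintro ⟨a, ha, rfl⟩
    exact ⟨a 0, ha 0, _, ⟨fun j => a j.succ, fun j => ha j.succ, rfl⟩,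
      by simp [List.ofFn_succ]⟩
  · rintro ⟨a, ha, _, ⟨c, hc, rfl⟩, rfl⟩
    exact ⟨Fin.cons a c, Fin.cases ha hc, by simp [List.ofFn_succ]⟩

open scoped Pointwise in
theorem setOf_isElemWord_cons (i : S.I) (w : List S.I) :
    {x | S.IsElemWord (i :: w) x} = S.cent i * {y | S.IsElemWord w y} :=
  Set.ext fun _ => isElemWord_cons_iff

theorem Wword_cons (i : S.I) (w : List S.I) : S.Wword (i :: w) = S.centered i * S.Wword w := by
  have span_cons : S.Wword (i :: w) =
      S.centered i * Submodule.span ℂ {y | S.IsElemWord w y} := by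
    rw [← span_cent, Submodule.span_mul_span, ← setOf_isElemWord_cons]
    rfl
  cases w with
  | nil =>
    simp only [span_cons, isElemWord_nil_iff, Set.ofPred_eq_eq_singleton]
    rw [← Submodule.one_eq_span, mul_one]
    exact (centered_mul_B i).symm
  | cons j w => exact span_cons

theorem Wword_singleton (i : S.I) : S.Wword [i] = S.centered i := by
  rw [Wword_cons]
  exact centered_mul_B i

theorem B_mul_Wword (w : List S.I) : Subalgebra.toSubmodule S.B * S.Wword w = S.Wword w := by
  cases w with
  | nil => exact Subalgebra.isIdempotentElem_toSubmodule S.B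
  | cons i w => rw [Wword_cons, ← mul_assoc, B_mul_centered]

theorem Wword_append (v w : List S.I) : S.Wword (v ++ w) = S.Wword v * S.Wword w := by
  induction v with
  | nil => exact (B_mul_Wword w).symm
  | cons i v ih => rw [List.cons_append, Wword_cons, ih, Wword_cons, mul_assoc]

theorem Wword_append_singleton (v : List S.I) (i : S.I) :
    S.Wword (v ++ [i]) = S.Wword v * S.centered i := by
  rw [Wword_append, Wword_singleton]

theorem star_mem_Wword_reverse {w : List S.I} {x : S.A} (hx : x ∈ S.Wword w) :
    star x ∈ S.Wword w.reverse := by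
  induction w generalizing x with
  | nil => exact S.star_B x hx
  | cons i w ih =>
    rw [Wword_cons] at hx
    rw [List.reverse_cons, Wword_append_singleton]
    induction hx using Submodule.mul_induction_on' with
    | mem_mul_mem a ha y hy =>
      rw [star_mul]
      exact Submodule.mul_mem_mul (ih hy) (star_mem_cent ha)
    | add x _ y _ hx hy =>
      rw [star_add]
      exact add_mem hx hy

theorem Wword_le_Wn {w : List S.I} (hw : S.Reduced w) : S.Wword w ≤ S.Wn w.length :=
  le_iSup₂_of_le w ⟨rfl, hw⟩ le_rfl

theorem B_le_Wn_zero : Subalgebra.toSubmodule S.B ≤ S.Wn 0 :=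
  Wword_le_Wn (w := []) List.IsChain.nil

theorem centered_le_Wn_one (i : S.I) : S.centered i ≤ S.Wn 1 :=
  Wword_singleton i ▸ Wword_le_Wn (w := [i]) (List.IsChain.singleton i)

theorem Ai_le_Wn_zero_sup_Wn_one (i : S.I) :
    Subalgebra.toSubmodule (S.Ai i) ≤ S.Wn 0 ⊔ S.Wn 1 := fun x hx =>
  add_sub_cancel (S.E x) x ▸ Submodule.add_mem_sup (B_le_Wn_zero (S.E_mem x))
    (centered_le_Wn_one i (sub_E_mem_cent hx))

theorem star_mem_Wn {n : ℕ} {x : S.A} (hx : x ∈ S.Wn n) : star x ∈ S.Wn n := by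
  suffices S.Wn n ≤ (S.Wn n).comap (starLinearEquiv ℂ : S.A ≃ₗ⋆[ℂ] S.A).toLinearMap from this hx
  refine iSup₂_le fun w ⟨hlen, hw⟩ y hy => ?_
  have hstar : star y ∈ S.Wn w.reverse.length :=
    Wword_le_Wn hw.reverse (star_mem_Wword_reverse hy)
  rwa [List.length_reverse, hlen] at hstar

theorem star_mem_Wn_zero_sup_Wn_one {x : S.A} (hx : x ∈ S.Wn 0 ⊔ S.Wn 1) :
    star x ∈ S.Wn 0 ⊔ S.Wn 1 := by
  obtain ⟨y, hy, z, hz, rfl⟩ := Submodule.mem_sup.1 hx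
  rw [star_add]
  exact Submodule.add_mem_sup (star_mem_Wn hy) (star_mem_Wn hz)

theorem IsPge2.map_eq_map_of_sub_mem {P : S.A →ₗ[ℂ] S.A} (hP : S.IsPge2 P) {x y : S.A}
    (hxy : x - y ∈ S.Wn 0 ⊔ S.Wn 1) : P x = P y := by
  obtain ⟨u, hu, v, hv, huv⟩ := Submodule.mem_sup.1 hxy
  rw [← sub_eq_zero, ← map_sub, ← huv, map_add, hP.1 u hu, hP.2.1 v hv, add_zero]

theorem opConj_mul_sub (T : S.A →ₗ[ℂ] S.A) (g h : S.A) :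
    S.opConj T (g * h) - g * S.opConj T h = star (mulDefect T (star h) (star g)) := by
  simp [opConj, mulDefect_apply]

/-- A first-letter map: a linear map of `W` that commutes with right multiplication by `B` and by
the letters of a reduced word after the first one, and that maps each `A_i` into itself. Such a map
is determined by a family of right `B`-linear maps `A_i → A_i` that agree on `B`; for `T_π` it is
the family `π`. -/
structure IsFirstLetterMap (T : S.A →ₗ[ℂ] S.A) : Prop where
  map_B_mul : ∀ b ∈ S.B, ∀ c ∈ S.B, T (b * c) = T b * c
  map_letter_mul : ∀ i w, S.Reduced (i :: w) → ∀ a ∈ S.cent i, ∀ y ∈ S.Wword w,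
    T (a * y) = T a * y
  map_mem_Ai : ∀ i, ∀ x ∈ S.Ai i, T x ∈ S.Ai i

section FirstLetterMap

variable {T : S.A →ₗ[ℂ] S.A}

theorem IsFirstLetterMap.mulDefect_eq_zero_of_reduced_cons (hT : IsFirstLetterMap T) {i : S.I}
    {v w : List S.I} (hvw : S.Reduced (i :: v ++ w)) {x y : S.A} (hx : x ∈ S.Wword (i :: v))
    (hy : y ∈ S.Wword w) : mulDefect T x y = 0 := by
  rw [Wword_cons] at hx
  induction hx using Submodule.mul_induction_on' with
  | mem_mul_mem a ha x hx =>
    have hxy : x * y ∈ S.Wword (v ++ w) := Wword_append v w ▸ Submodule.mul_mem_mul hx hy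
    rw [mulDefect_apply, mul_assoc, hT.map_letter_mul i _ hvw a ha _ hxy,
      hT.map_letter_mul i v hvw.of_append_left a ha x hx, mul_assoc, sub_self]
  | add x _ x' _ hx hx' => rw [map_add, LinearMap.add_apply, hx, hx', add_zero]

theorem IsFirstLetterMap.mulDefect_eq_zero_of_reduced_append (hT : IsFirstLetterMap T)
    {v w : List S.I} (hv : v ≠ []) (hvw : S.Reduced (v ++ w)) {x y : S.A} (hx : x ∈ S.Wword v)
    (hy : y ∈ S.Wword w) : mulDefect T x y = 0 := by
  obtain ⟨i, v, rfl⟩ := List.exists_cons_of_ne_nil hv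
  exact hT.mulDefect_eq_zero_of_reduced_cons hvw hx hy

theorem IsFirstLetterMap.mulDefect_eq_zero_of_mem_B (hT : IsFirstLetterMap T) {v : List S.I}
    (hv : S.Reduced v) {x b : S.A} (hx : x ∈ S.Wword v) (hb : b ∈ S.B) :
    mulDefect T x b = 0 := by
  cases v with
  | nil => rw [mulDefect_apply, hT.map_B_mul x hx b hb, sub_self]
  | cons i v =>
    exact hT.mulDefect_eq_zero_of_reduced_cons (w := []) (by rwa [List.append_nil]) hx hb

theorem IsFirstLetterMap.mulDefect_mem_Ai (hT : IsFirstLetterMap T) {i : S.I} {x y : S.A}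
    (hx : x ∈ S.Ai i) (hy : y ∈ S.Ai i) : mulDefect T x y ∈ S.Ai i :=
  sub_mem (hT.map_mem_Ai i _ (mul_mem hx hy)) (mul_mem (hT.map_mem_Ai i x hx) hy)

theorem IsFirstLetterMap.map₂_mulDefect_append_singleton_cons_le (hT : IsFirstLetterMap T)
    {v w : List S.I} {i : S.I} (hv : v ≠ []) (hvi : S.Reduced (v ++ [i]))
    (hiw : S.Reduced (i :: w)) {V : Submodule ℂ S.A}
    (hV : Submodule.map₂ (mulDefect T) (S.Wword v) (S.Wword w) ≤ V) :
    Submodule.map₂ (mulDefect T) (S.Wword (v ++ [i])) (S.Wword (i :: w)) ≤ V := by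
  rw [Wword_append_singleton, Wword_cons, map₂_mul_mul_le_iff]
  intro x hx a ha c hc y hy
  have letter_right : mulDefect T x a = 0 :=
    hT.mulDefect_eq_zero_of_reduced_append hv hvi hx (Wword_singleton i ▸ ha)
  have centered_part : mulDefect T x ((a * c - S.E (a * c)) * y) = 0 := by
    refine hT.mulDefect_eq_zero_of_reduced_append hv (hvi.append_overlap hiw) hx ?_
    exact Wword_cons i w ▸ Submodule.mul_mem_mul (sub_E_mem_cent (mul_mem ha.1 hc.1)) hy
  have scalar_part : mulDefect T x (S.E (a * c) * y) ∈ V :=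
    hV (Submodule.apply_mem_map₂ _ hx
      (B_mul_Wword w ▸ Submodule.mul_mem_mul (S.E_mem (a * c)) hy))
  have cancel : mulDefect T (x * a) (c * y) = mulDefect T x (S.E (a * c) * y) :=
    calc mulDefect T (x * a) (c * y) = mulDefect T x (a * c * y) := by
          rw [mulDefect_mul_left, letter_right, zero_mul, sub_zero, mul_assoc]
      _ = mulDefect T x ((a * c - S.E (a * c)) * y) + mulDefect T x (S.E (a * c) * y) := by
          rw [← map_add, ← add_mul, sub_add_cancel]
      _ = mulDefect T x (S.E (a * c) * y) := by rw [centered_part, zero_add]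
  rwa [cancel]

theorem IsFirstLetterMap.map₂_mulDefect_Wword_le (hT : IsFirstLetterMap T) {V : Submodule ℂ S.A}
    {v w : List S.I} (hv : S.Reduced v) (hw : S.Reduced w) (hwv : w.length ≤ v.length)
    (hV : v.length = w.length → S.Wn 0 ⊔ S.Wn 1 ≤ V) :
    Submodule.map₂ (mulDefect T) (S.Wword v) (S.Wword w) ≤ V := by
  induction w generalizing v with
  | nil =>
    refine Submodule.map₂_le.2 fun x hx b hb => ?_
    rw [hT.mulDefect_eq_zero_of_mem_B hv hx hb]
    exact V.zero_mem
  | cons j w ih =>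
    obtain rfl | ⟨v, i, rfl⟩ := List.eq_nil_or_concat' v
    · simp at hwv
    simp only [List.length_append, List.length_cons, List.length_nil] at hwv hV
    by_cases hij : i = j
    · subst hij
      by_cases hv_nil : v = []
      · subst hv_nil
        obtain rfl : w = [] := by simpa using hwv
        rw [List.nil_append, Wword_singleton]
        exact Submodule.map₂_le.2 fun x hx y hy =>
          hV rfl (Ai_le_Wn_zero_sup_Wn_one i (hT.mulDefect_mem_Ai hx.1 hy.1))
      · exact hT.map₂_mulDefect_append_singleton_cons_le hv_nil hv hw
          (ih hv.of_append_left hw.of_cons (by omega) fun h => hV (by omega))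
    · refine Submodule.map₂_le.2 fun x hx y hy => ?_
      rw [hT.mulDefect_eq_zero_of_reduced_append (by simp) (hv.append_cons_of_ne hw hij) hx hy]
      exact V.zero_mem

theorem IsFirstLetterMap.mulDefect_mem (hT : IsFirstLetterMap T) {V : Submodule ℂ S.A}
    {l n : ℕ} (hnl : n ≤ l) (hV : l = n → S.Wn 0 ⊔ S.Wn 1 ≤ V) {g h : S.A} (hg : g ∈ S.Wn l)
    (hh : h ∈ S.Wn n) : mulDefect T g h ∈ V := by
  suffices Submodule.map₂ (mulDefect T) (S.Wn l) (S.Wn n) ≤ V from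
    this (Submodule.apply_mem_map₂ _ hg hh)
  simp only [Wn, Submodule.map₂_iSup_left, Submodule.map₂_iSup_right, iSup_le_iff]
  rintro w ⟨rfl, hw⟩ v ⟨rfl, hv⟩
  exact hT.map₂_mulDefect_Wword_le hv hw hnl hV

theorem IsFirstLetterMap.mulDefect_eq_zero_of_lt (hT : IsFirstLetterMap T) {l n : ℕ} (hnl : n < l)
    {g h : S.A} (hg : g ∈ S.Wn l) (hh : h ∈ S.Wn n) : mulDefect T g h = 0 :=
  (Submodule.mem_bot ℂ).1 (hT.mulDefect_mem hnl.le (fun h => absurd h hnl.ne') hg hh)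

theorem IsFirstLetterMap.mulDefect_mem_Wn_zero_sup_Wn_one (hT : IsFirstLetterMap T) {n : ℕ}
    {g h : S.A} (hg : g ∈ S.Wn n) (hh : h ∈ S.Wn n) : mulDefect T g h ∈ S.Wn 0 ⊔ S.Wn 1 :=
  hT.mulDefect_mem le_rfl (fun _ => le_rfl) hg hh

end FirstLetterMap

section Tpi

variable {P : S.RepFamily} {T : S.A →ₗ[ℂ] S.A}

theorem IsTpi.map_letter_mul_of_isElemWord (hT : S.IsTpi P T) {i : S.I} {w : List S.I}
    (hw : S.Reduced (i :: w)) {a y : S.A} (ha : a ∈ S.cent i) (hy : S.IsElemWord w y) :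
    T (a * y) = P.π i a * y := by
  obtain ⟨c, hc, rfl⟩ := hy
  simpa [List.ofFn_succ] using hT.2 (i :: w) hw (Fin.cons a c) (Fin.cases ha hc)

theorem IsTpi.map_letter (hT : S.IsTpi P T) {i : S.I} {a : S.A} (ha : a ∈ S.cent i) :
    T a = P.π i a := by
  simpa using hT.map_letter_mul_of_isElemWord (List.IsChain.singleton i) ha
    (isElemWord_nil_iff.2 rfl)

theorem IsTpi.map_eq_of_mem_Ai (hT : S.IsTpi P T) {i : S.I} {x : S.A} (hx : x ∈ S.Ai i) :
    T x = P.π i x := by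
  have h := hT.map_letter (sub_E_mem_cent hx)
  rwa [map_sub, map_sub, hT.1 _ (S.E_mem x), P.fix_B i _ (S.E_mem x), sub_left_inj] at h

theorem IsTpi.map_letter_mul (hT : S.IsTpi P T) {i : S.I} {w : List S.I}
    (hw : S.Reduced (i :: w)) {a y : S.A} (ha : a ∈ S.cent i) (hy : y ∈ S.Wword w) :
    T (a * y) = T a * y := by
  cases w with
  | nil =>
    have hyi : y ∈ S.Ai i := S.B_le i hy
    rw [hT.map_eq_of_mem_Ai (mul_mem ha.1 hyi), hT.map_letter ha, P.map_mul i a ha.1 y hyi,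
      P.fix_B i y hy]
  | cons j w =>
    suffices S.Wword (j :: w) ≤ LinearMap.ker (mulDefect T a) from sub_eq_zero.1 (this hy)
    refine Submodule.span_le.2 fun z hz => ?_
    rw [SetLike.mem_coe, LinearMap.mem_ker, mulDefect_apply,
      hT.map_letter_mul_of_isElemWord hw ha hz, hT.map_letter ha, sub_self]

theorem IsTpi.isFirstLetterMap (hT : S.IsTpi P T) : IsFirstLetterMap T where
  map_B_mul b hb c hc := by rw [hT.1 _ (mul_mem hb hc), hT.1 b hb]
  map_letter_mul _ _ hw _ ha _ hy := hT.map_letter_mul hw ha hy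
  map_mem_Ai i x hx := hT.map_eq_of_mem_Ai hx ▸ P.mem i x hx

end Tpi

end AmalgSetting

open AmalgSetting in
theorem first_letter_map_word_relations_general {S : AmalgSetting} {T : S.A →ₗ[ℂ] S.A}
    (hT : IsFirstLetterMap T) {l n : ℕ} {g h : S.A} (hg : g ∈ S.Wn l) (hh : h ∈ S.Wn n) :
    (l > n → T (g * h) = T g * h) ∧
    (n > l → S.opConj T (g * h) = g * S.opConj T h) ∧
    (l = n → T (g * h) - T g * h ∈ S.Wn 0 ⊔ S.Wn 1 ∧
      S.opConj T (g * h) - g * S.opConj T h ∈ S.Wn 0 ⊔ S.Wn 1) := by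
  refine ⟨fun hlt => sub_eq_zero.1 (hT.mulDefect_eq_zero_of_lt hlt hg hh), fun hlt => ?_, ?_⟩
  · rw [← sub_eq_zero, opConj_mul_sub,
      hT.mulDefect_eq_zero_of_lt hlt (star_mem_Wn hh) (star_mem_Wn hg), star_zero]
  · rintro rfl
    refine ⟨hT.mulDefect_mem_Wn_zero_sup_Wn_one hg hh, ?_⟩
    rw [opConj_mul_sub]
    exact star_mem_Wn_zero_sup_Wn_one
      (hT.mulDefect_mem_Wn_zero_sup_Wn_one (star_mem_Wn hh) (star_mem_Wn hg))

open AmalgSetting in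
/-- Lemma `rel1`: for `g ∈ W_l`, `h ∈ W_n`:
(i) if `l > n` then `T_π(gh) = T_π(g)h`; (ii) if `n > l` then `T_π^op(gh) = g T_π^op(h)`;
(iii) if `l = n` then `P_{≥2}[T_π(gh)] = P_{≥2}[T_π(g)h]` and
`P_{≥2}[T_π^op(gh)] = P_{≥2}[g T_π^op(h)]`. -/
theorem first_letter_map_word_relations (S : AmalgSetting) (P : S.RepFamily)
    (Tpi : S.A →ₗ[ℂ] S.A) (hT : S.IsTpi P Tpi)
    (Pge2 : S.A →ₗ[ℂ] S.A) (hP : S.IsPge2 Pge2)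
    (l n : ℕ) (g h : S.A) (hg : g ∈ S.Wn l) (hh : h ∈ S.Wn n) :
    (l > n → Tpi (g * h) = Tpi g * h) ∧
    (n > l → S.opConj Tpi (g * h) = g * S.opConj Tpi h) ∧
    (l = n → Pge2 (Tpi (g * h)) = Pge2 (Tpi g * h) ∧
      Pge2 (S.opConj Tpi (g * h)) = Pge2 (g * S.opConj Tpi h)) := by
  obtain ⟨left, right, balanced⟩ :=
    first_letter_map_word_relations_general hT.isFirstLetterMap hg hh
  exact ⟨left, right, fun e => (balanced e).imp hP.map_eq_map_of_sub_mem hP.map_eq_map_of_sub_mem⟩
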